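/- For λ ∈ (0,1), 0 < α < 1/λ, β > 0, a positive integer n with n + α < 1/λ, the n-th moment of a degenerate gamma random variable X ~ Γ_λ(α,β) satisfies Γ_λ(α) · β^n · E[X^n] = Γ_λ(n+α), i.e., E[X^n] = Γ_λ(n+α)/(β^n Γ_λ(α)). -/

import Mathlib

open MeasureTheory

/-- The degenerate gamma function `Γ_λ(s) = ∫_0^∞ (1+λt)^{-1/λ} t^{s-1} dt`. -/
noncomputable def degGamma (lam s : ℝ) : ℝ :=
  ∫ t in Set.Ioi (0:ℝ), (1 + lam * t) ^ (-1/lam) * t ^ (s - 1)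

/-- The probability density function of the degenerate gamma distribution `Γ_λ(α,β)`. -/
noncomputable def degGammaPdf (lam α β x : ℝ) : ℝ :=
  if 0 < x then (1 / degGamma lam α) * β * (1 + lam * β * x) ^ (-1/lam) * (β * x) ^ (α - 1)
  else 0

/-- The integrand of `Γ_λ(s)`: the degenerate exponential `e_λ^{-t} = (1+λt)^{-1/λ}` against the
Mellin weight `t^{s-1}`. -/
noncomputable def degGammaIntegrand (lam s t : ℝ) : ℝ :=
  (1 + lam * t) ^ (-1/lam) * t ^ (s - 1)

section

open Set Filter Asymptotics Topology

variable {lam s α β x : ℝ}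

theorem degGamma_eq_integral_degGammaIntegrand :
    degGamma lam s = ∫ t in Ioi 0, degGammaIntegrand lam s t :=
  rfl

theorem degGammaIntegrand_pos (hlam : 0 ≤ lam) (hx : 0 < x) : 0 < degGammaIntegrand lam s x := by
  unfold degGammaIntegrand
  positivity

theorem continuousOn_one_add_mul_rpow (hlam : 0 ≤ lam) (p : ℝ) :
    ContinuousOn (fun t ↦ (1 + lam * t) ^ p) (Ici 0) := by
  refine ContinuousOn.rpow_const (by fun_prop) fun t ht ↦ Or.inl ?_
  have : 0 ≤ lam * t := mul_nonneg hlam ht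
  positivity

theorem isBigO_one_add_mul_rpow_atTop (hlam : 0 < lam) {p : ℝ} (hp : p ≤ 0) :
    (fun t ↦ (1 + lam * t) ^ p) =O[atTop] fun t ↦ t ^ p := by
  refine IsBigO.of_bound (lam ^ p) ?_
  filter_upwards [eventually_gt_atTop 0] with t ht
  rw [Real.norm_of_nonneg (by positivity), Real.norm_of_nonneg (by positivity),
    ← Real.mul_rpow hlam.le ht.le]
  exact Real.rpow_le_rpow_of_nonpos (by positivity) (by linarith) hp

theorem integrableOn_degGammaIntegrand (hlam : 0 < lam) (hs₀ : 0 < s) (hs₁ : s < 1 / lam) :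
    IntegrableOn (degGammaIntegrand lam s) (Ioi 0) := by
  have h_cont := continuousOn_one_add_mul_rpow hlam.le (-1 / lam)
  have h_top : (fun t ↦ (1 + lam * t) ^ (-1 / lam)) =O[atTop] fun t ↦ t ^ (-(1 / lam)) := by
    rw [neg_div]
    exact isBigO_one_add_mul_rpow_atTop hlam (neg_nonpos.2 (by positivity))
  have h_zero : (fun t ↦ (1 + lam * t) ^ (-1 / lam)) =O[𝓝[>] 0] fun t ↦ t ^ (-(0 : ℝ)) := by
    simpa only [neg_zero, Real.rpow_zero] using
      ((h_cont 0 self_mem_Ici).mono_left (nhdsWithin_mono 0 Ioi_subset_Ici_self)).isBigO_one ℝ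
  have h_mellin := mellin_convergent_of_isBigO_scalar
    ((h_cont.mono Ioi_subset_Ici_self).locallyIntegrableOn measurableSet_Ioi)
    h_top hs₁ h_zero hs₀
  exact h_mellin.congr_fun (fun _ _ ↦ mul_comm _ _) measurableSet_Ioi

theorem degGamma_pos (hlam : 0 < lam) (hs₀ : 0 < s) (hs₁ : s < 1 / lam) : 0 < degGamma lam s := by
  have h_pos : ∀ t ∈ Ioi (0 : ℝ), 0 < degGammaIntegrand lam s t :=
    fun _ ht ↦ degGammaIntegrand_pos hlam.le ht
  rw [degGamma_eq_integral_degGammaIntegrand]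
  refine (setIntegral_pos_iff_support_of_nonneg_ae
    (ae_restrict_of_forall_mem measurableSet_Ioi fun t ht ↦ (h_pos t ht).le)
    (integrableOn_degGammaIntegrand hlam hs₀ hs₁)).2 ?_
  have h_supp : Ioi 0 ⊆ Function.support (degGammaIntegrand lam s) := fun t ht ↦ (h_pos t ht).ne'
  rw [inter_eq_right.2 h_supp, Real.volume_Ioi]
  exact ENNReal.zero_lt_top

theorem rpow_mul_degGammaPdf (hβ : 0 < β) (hx : 0 < x) :
    x ^ s * degGammaPdf lam α β x =
      β / (β ^ s * degGamma lam α) * degGammaIntegrand lam (s + α) (β * x) := by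
  have h_split : (β * x) ^ (s + α - 1) = β ^ s * x ^ s * (β * x) ^ (α - 1) := by
    rw [add_sub_assoc, Real.rpow_add (mul_pos hβ hx), Real.mul_rpow hβ.le hx.le]
  have h_pow : β ^ s ≠ 0 := (Real.rpow_pos_of_pos hβ s).ne'
  rw [degGammaPdf, if_pos hx, degGammaIntegrand, h_split, mul_assoc lam]
  field_simp

theorem rpow_mul_degGammaPdf_eq_indicator (hβ : 0 < β) :
    (fun x ↦ x ^ s * degGammaPdf lam α β x) = (Ioi 0).indicator fun x ↦
      β / (β ^ s * degGamma lam α) * degGammaIntegrand lam (s + α) (β * x) := by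
  ext x
  by_cases hx : 0 < x
  · rw [indicator_of_mem (mem_Ioi.2 hx), rpow_mul_degGammaPdf hβ hx]
  · rw [indicator_of_notMem (notMem_Ioi.2 (not_lt.1 hx)), degGammaPdf, if_neg hx, mul_zero]

theorem degGamma_moment_general (hlam : 0 < lam) (hα₀ : 0 < α) (hα₁ : α < 1 / lam) (hβ : 0 < β)
    (hs₀ : 0 < s + α) (hs₁ : s + α < 1 / lam) :
    Integrable (fun x ↦ x ^ s * degGammaPdf lam α β x) ∧
      degGamma lam α * β ^ s * ∫ x, x ^ s * degGammaPdf lam α β x = degGamma lam (s + α) := by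
  rw [rpow_mul_degGammaPdf_eq_indicator hβ]
  constructor
  · have h_int : IntegrableOn (fun x ↦ degGammaIntegrand lam (s + α) (β * x)) (Ioi 0) := by
      rw [integrableOn_Ioi_comp_mul_left_iff _ 0 hβ, mul_zero]
      exact integrableOn_degGammaIntegrand hlam hs₀ hs₁
    exact IntegrableOn.integrable_indicator (h_int.const_mul _) measurableSet_Ioi
  · have h_subst : ∫ x in Ioi 0, degGammaIntegrand lam (s + α) (β * x) =
        β⁻¹ * degGamma lam (s + α) := by
      rw [integral_comp_mul_left_Ioi _ 0 hβ, mul_zero, smul_eq_mul,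
        degGamma_eq_integral_degGammaIntegrand]
    have h_gamma : degGamma lam α ≠ 0 := (degGamma_pos hlam hα₀ hα₁).ne'
    have h_pow : β ^ s ≠ 0 := (Real.rpow_pos_of_pos hβ s).ne'
    rw [integral_indicator measurableSet_Ioi, integral_const_mul, h_subst]
    field_simp

end

theorem degGamma_moment (lam α β : ℝ) (hlam : lam ∈ Set.Ioo (0:ℝ) 1)
    (hα0 : 0 < α) (hα1 : α < 1 / lam) (hβ : 0 < β) (n : ℕ) (hn : 1 ≤ n)
    (hnα : n + α < 1 / lam) :
    ∫ x : ℝ, x ^ n * degGammaPdf lam α β x = degGamma lam (n + α) / (β ^ n * degGamma lam α) := by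
  rw [eq_div_iff (mul_pos (pow_pos hβ n) (degGamma_pos hlam.1 hα0 hα1)).ne', mul_comm,
    mul_comm (β ^ n)]
  exact_mod_cast (degGamma_moment_general hlam.1 hα0 hα1 hβ (s := n) (by positivity) hnα).2
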